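/- Let x ~ N(μ, Σ) on ℝ^n with Σ positive definite, A an n×d matrix of rank d, y ∈ ℝ^d. Let Q = [Q₁ Q₂] be orthogonal with Q₁ spanning the column space of A and Q₂ its null space, z₁* = (AᵀQ₁)⁻¹y, Σ̃ = QᵀΣQ with blocks Σ̃ᵢⱼ, μ̃ = Qᵀμ, B = Σ̃₂₁Σ̃₁₁⁻¹, Ṽ = Σ̃₂₂ - BΣ̃₁₁Bᵀ. Then the conditional distribution of x given Aᵀx = y is Gaussian with mean Q₁z₁* + Q₂(μ̃₂ + B(z₁* - μ̃₁)) and covariance Q₂ṼQ₂ᵀ. -/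

import Mathlib

open Matrix MeasureTheory ProbabilityTheory Real

/-- The multivariate Gaussian measure `N(m, S)` on `ℝ^p`, defined by its density with respect
to Lebesgue measure. -/
noncomputable def mvGaussian {p : ℕ} (m : Fin p → ℝ) (S : Matrix (Fin p) (Fin p) ℝ) :
    Measure (Fin p → ℝ) :=
  volume.withDensity fun x =>
    ENNReal.ofReal ((Real.sqrt ((2 * π) ^ p * S.det))⁻¹ *
      Real.exp (-(1/2) * ((x - m) ⬝ᵥ (S⁻¹ *ᵥ (x - m)))))

/-!
Let `F` be the matrix of the residual `Q₂ᵀx - B Q₁ᵀx` of the linear regression of `Q₂ᵀx` on `Q₁ᵀx`.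
By the choice of `B`, the residual is uncorrelated with `Q₁ᵀx`, hence with `Aᵀx`; since the two are
jointly Gaussian, they are independent. As `x = Q₁z₁ + Q₂(Bz₁ + Fx)` with `z₁ = (AᵀQ₁)⁻¹Aᵀx`,
conditioning on `Aᵀx = y` freezes `z₁` and leaves the law `N(Fμ, FΣFᵀ)` of the residual unchanged,
and `FΣFᵀ` is the Schur complement `Ṽ`.

The laws of linear images and the covariances are read off from Mathlib's `multivariateGaussian`,
which for positive definite `S` is `mvGaussian` up to the identification of `ℝ^p` with Euclidean
space: both are the image of the standard Gaussian under `x ↦ m + √S x`.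
-/

section WithDensity

variable {ι : Type*} [Fintype ι] {α : ι → Type*} [∀ i, MeasurableSpace (α i)]
  {μ : ∀ i, Measure (α i)} [∀ i, SigmaFinite (μ i)]

theorem pi_withDensity_ofReal {f : ∀ i, α i → ℝ} (hf : ∀ i, Integrable (f i) (μ i))
    (hf₀ : ∀ i x, 0 ≤ f i x) :
    Measure.pi (fun i => (μ i).withDensity fun x => ENNReal.ofReal (f i x)) =
      (Measure.pi μ).withDensity fun x => ENNReal.ofReal (∏ i, f i (x i)) := by
  have (i : ι) : IsFiniteMeasure ((μ i).withDensity fun x => ENNReal.ofReal (f i x)) :=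
    isFiniteMeasure_withDensity_ofReal (hf i).2
  refine Measure.pi_eq fun s hs => ?_
  have hint : Integrable (fun x => ∏ i, f i (x i))
      (Measure.pi fun i => (μ i).restrict (s i)) :=
    Integrable.fintype_prod_dep fun i => (hf i).restrict
  rw [withDensity_apply _ (.univ_pi hs), Measure.restrict_pi_pi,
    ← ofReal_integral_eq_lintegral_ofReal hint
      (.of_forall fun x => Finset.prod_nonneg fun i _ => hf₀ i (x i)),
    integral_fintype_prod_eq_prod,
    ENNReal.ofReal_prod_of_nonneg fun i _ => integral_nonneg (hf₀ i)]
  refine Finset.prod_congr rfl fun i _ => ?_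
  rw [withDensity_apply _ (hs i), ofReal_integral_eq_lintegral_ofReal (hf i).restrict
    (.of_forall (hf₀ i))]

end WithDensity

theorem map_withDensity_comp {α β : Type*} [MeasurableSpace α] [MeasurableSpace β]
    {μ : Measure α} {g : α → β} {ρ : β → ENNReal} (hg : Measurable g) (hρ : Measurable ρ) :
    (μ.withDensity (ρ ∘ g)).map g = (μ.map g).withDensity ρ := by
  ext s hs
  rw [Measure.map_apply hg hs, withDensity_apply _ (hg hs), withDensity_apply _ hs,
    setLIntegral_map hs hρ hg, Function.comp_def]

theorem measurable_mulVec {m n : Type*} [Countable m] [Fintype n] (T : Matrix m n ℝ) :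
    Measurable fun x : n → ℝ => T *ᵥ x :=
  (Continuous.matrix_mulVec continuous_const continuous_id).measurable

theorem map_affine_volume_pi {ι : Type*} [Fintype ι] [DecidableEq ι] {C : Matrix ι ι ℝ}
    (hC : C.det ≠ 0) (b : ι → ℝ) :
    (volume : Measure (ι → ℝ)).map (fun x => b + C *ᵥ x) =
      ENNReal.ofReal |C.det⁻¹| • volume := by
  have hlin : (volume : Measure (ι → ℝ)).map (fun x => C *ᵥ x) =
      ENNReal.ofReal |C.det⁻¹| • volume :=
    Real.map_matrix_volume_pi_eq_smul_volume_pi hC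
  rw [← Function.comp_def (fun x => b + x), ← Measure.map_map (measurable_const_add b)
    (measurable_mulVec C), hlin, Measure.map_smul, map_add_left_eq_self]

section Density

variable {p : ℕ}

/-- The Lebesgue density of `mvGaussian m S`, real-valued like `gaussianPDFReal`. -/
noncomputable def mvGaussianPDFReal (m : Fin p → ℝ) (S : Matrix (Fin p) (Fin p) ℝ)
    (x : Fin p → ℝ) : ℝ :=
  (√((2 * π) ^ p * S.det))⁻¹ * rexp (-(1/2) * ((x - m) ⬝ᵥ (S⁻¹ *ᵥ (x - m))))

theorem mvGaussian_eq_withDensity (m : Fin p → ℝ) (S : Matrix (Fin p) (Fin p) ℝ) :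
    mvGaussian m S = volume.withDensity fun x => ENNReal.ofReal (mvGaussianPDFReal m S x) :=
  rfl

theorem continuous_mvGaussianPDFReal (m : Fin p → ℝ) (S : Matrix (Fin p) (Fin p) ℝ) :
    Continuous (mvGaussianPDFReal m S) := by
  unfold mvGaussianPDFReal
  fun_prop

theorem mvGaussianPDFReal_zero_one (x : Fin p → ℝ) :
    mvGaussianPDFReal 0 1 x = ∏ i, gaussianPDFReal 0 1 (x i) := by
  have hsqrt : (√((2 * π) ^ p))⁻¹ = ∏ _i : Fin p, (√(2 * π))⁻¹ := by
    rw [Finset.prod_const, Finset.card_univ, Fintype.card_fin, inv_pow, _root_.inv_inj,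
      Real.sqrt_eq_iff_mul_self_eq (by positivity) (by positivity), ← mul_pow,
      Real.mul_self_sqrt (by positivity)]
  have hexp : rexp (-(1/2) * (x ⬝ᵥ x)) = ∏ i, rexp (-x i ^ 2 / 2) := by
    rw [← Real.exp_sum, dotProduct, Finset.mul_sum]
    exact congrArg rexp (Finset.sum_congr rfl fun i _ => by ring)
  simp only [mvGaussianPDFReal, gaussianPDFReal, det_one, mul_one, inv_one, one_mulVec, sub_zero,
    NNReal.coe_one, Finset.prod_mul_distrib, hsqrt, hexp]

theorem mvGaussian_zero_one :
    mvGaussian (0 : Fin p → ℝ) 1 = Measure.pi fun _ => gaussianReal 0 1 := by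
  simp_rw [gaussianReal_of_var_ne_zero 0 one_ne_zero, gaussianPDF_def]
  rw [pi_withDensity_ofReal (fun _ => integrable_gaussianPDFReal 0 1)
    fun _ => gaussianPDFReal_nonneg 0 1, mvGaussian_eq_withDensity, volume_pi]
  simp only [mvGaussianPDFReal_zero_one]

theorem mvGaussianPDFReal_affine {C : Matrix (Fin p) (Fin p) ℝ} (hC : C.det ≠ 0)
    (b m : Fin p → ℝ) (S : Matrix (Fin p) (Fin p) ℝ) (x : Fin p → ℝ) :
    |C.det| * mvGaussianPDFReal (b + C *ᵥ m) (C * S * Cᵀ) (b + C *ᵥ x) =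
      mvGaussianPDFReal m S x := by
  have hnorm : √((2 * π) ^ p * (C * S * Cᵀ).det) = |C.det| * √((2 * π) ^ p * S.det) := by
    rw [det_mul, det_mul, det_transpose, ← Real.sqrt_sq_eq_abs, ← Real.sqrt_mul (sq_nonneg _)]
    congr 1
    ring
  have hquad : (C *ᵥ (x - m)) ⬝ᵥ ((C * S * Cᵀ)⁻¹ *ᵥ (C *ᵥ (x - m))) =
      (x - m) ⬝ᵥ (S⁻¹ *ᵥ (x - m)) := by
    have hinv : Cᵀ * (C * S * Cᵀ)⁻¹ * C = S⁻¹ := by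
      rw [Matrix.mul_inv_rev, Matrix.mul_inv_rev, Matrix.mul_assoc, Matrix.mul_assoc,
        Matrix.mul_assoc, nonsing_inv_mul _ hC.isUnit, Matrix.mul_one, ← Matrix.mul_assoc,
        mul_nonsing_inv _ (by rw [det_transpose]; exact hC.isUnit), Matrix.one_mul]
    rw [← hinv, ← mulVec_mulVec, ← mulVec_mulVec, dotProduct_mulVec (x - m), vecMul_transpose]
  rw [mvGaussianPDFReal, mvGaussianPDFReal, hnorm, add_sub_add_left_eq_sub, ← mulVec_sub, hquad,
    mul_inv, ← mul_assoc, mul_inv_cancel_left₀ (abs_ne_zero.2 hC)]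

theorem mvGaussian_map_affine {C : Matrix (Fin p) (Fin p) ℝ} (hC : C.det ≠ 0)
    (b m : Fin p → ℝ) (S : Matrix (Fin p) (Fin p) ℝ) :
    (mvGaussian m S).map (fun x => b + C *ᵥ x) = mvGaussian (b + C *ᵥ m) (C * S * Cᵀ) := by
  set g : (Fin p → ℝ) → (Fin p → ℝ) := fun x => b + C *ᵥ x
  set ρ : (Fin p → ℝ) → ENNReal :=
    fun x => ENNReal.ofReal (mvGaussianPDFReal (b + C *ᵥ m) (C * S * Cᵀ) x)
  have hg : Measurable g := (measurable_mulVec C).const_add b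
  have hρ : Measurable ρ := (continuous_mvGaussianPDFReal _ _).measurable.ennreal_ofReal
  have hdensity : mvGaussian m S = ENNReal.ofReal |C.det| • volume.withDensity (ρ ∘ g) := by
    rw [mvGaussian_eq_withDensity, ← withDensity_smul _ (hρ.comp hg)]
    refine congrArg _ (funext fun x => ?_)
    rw [← mvGaussianPDFReal_affine hC b, ENNReal.ofReal_mul (abs_nonneg _)]
    rfl
  rw [hdensity, Measure.map_smul, map_withDensity_comp hg hρ, map_affine_volume_pi hC,
    withDensity_smul_measure, smul_smul, ← ENNReal.ofReal_mul (abs_nonneg _), ← abs_mul,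
    mul_inv_cancel₀ hC, abs_one, ENNReal.ofReal_one, one_smul, mvGaussian_eq_withDensity]

theorem mvGaussian_map_const_add (b m : Fin p → ℝ) (S : Matrix (Fin p) (Fin p) ℝ) :
    (mvGaussian m S).map (fun x => b + x) = mvGaussian (b + m) S := by
  simpa using mvGaussian_map_affine (C := 1) (by simp) b m S

end Density

section Gaussian

variable {p q r : ℕ}

open scoped MatrixOrder in
theorem mvGaussian_eq_map_multivariateGaussian (m : Fin p → ℝ) {S : Matrix (Fin p) (Fin p) ℝ}
    (hS : S.PosDef) :
    mvGaussian m S = (multivariateGaussian (WithLp.toLp 2 m) S).map WithLp.ofLp := by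
  set R := CFC.sqrt S
  have hRR : R * R = S := CFC.sqrt_mul_sqrt_self S hS.posSemidef.nonneg
  have hRt : Rᵀ = R := by
    simpa using (nonneg_iff_posSemidef.1 (CFC.sqrt_nonneg S)).isHermitian.eq
  have hR : R.det ≠ 0 := fun h => hS.det_pos.ne' (by rw [← hRR, det_mul, h, zero_mul])
  have hmap := mvGaussian_map_affine hR m 0 1
  rw [mulVec_zero, add_zero, Matrix.mul_one, hRt, hRR, mvGaussian_zero_one] at hmap
  rw [← hmap, multivariateGaussian, ← map_pi_eq_stdGaussian, Measure.map_map (by fun_prop)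
    (by fun_prop), Measure.map_map (by fun_prop) (by fun_prop)]
  simp [Function.comp_def, R]

theorem isGaussian_mvGaussian (m : Fin p → ℝ) {S : Matrix (Fin p) (Fin p) ℝ} (hS : S.PosDef) :
    IsGaussian (mvGaussian m S) := by
  rw [mvGaussian_eq_map_multivariateGaussian m hS]
  exact isGaussian_map (PiLp.continuousLinearEquiv 2 ℝ fun _ : Fin p => ℝ).toContinuousLinearMap

theorem inner_toLpLin_left {ι κ : Type*} [Fintype ι] [DecidableEq ι] [Fintype κ]
    (T : Matrix κ ι ℝ) (x : EuclideanSpace ℝ ι) (t : EuclideanSpace ℝ κ) :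
    inner ℝ (toLpLin 2 2 T x) t = inner ℝ x (WithLp.toLp 2 (Tᵀ *ᵥ t.ofLp)) := by
  simp [EuclideanSpace.inner_eq_star_dotProduct, mulVec_transpose, dotProduct_mulVec]

theorem multivariateGaussian_map_toLpLin {ι κ : Type*} [Fintype ι] [DecidableEq ι] [Fintype κ]
    [DecidableEq κ] (m : EuclideanSpace ℝ ι) {S : Matrix ι ι ℝ} (hS : S.PosSemidef)
    (T : Matrix κ ι ℝ) :
    (multivariateGaussian m S).map (toLpLin 2 2 T) =
      multivariateGaussian (toLpLin 2 2 T m) (T * S * Tᵀ) := by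
  have hTST : (T * S * Tᵀ).PosSemidef := by
    simpa using hS.mul_mul_conjTranspose_same T
  have hT : Measurable (toLpLin 2 2 T : EuclideanSpace ℝ ι → EuclideanSpace ℝ κ) :=
    (LinearMap.continuous_of_finiteDimensional _).measurable
  have : IsProbabilityMeasure ((multivariateGaussian m S).map (toLpLin 2 2 T)) :=
    Measure.isProbabilityMeasure_map hT.aemeasurable
  refine Measure.ext_of_charFun (funext fun t => ?_)
  have hchar : charFun ((multivariateGaussian m S).map (toLpLin 2 2 T)) t =
      charFun (multivariateGaussian m S) (WithLp.toLp 2 (Tᵀ *ᵥ t.ofLp)) := by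
    rw [charFun_apply, charFun_apply, integral_map hT.aemeasurable (by fun_prop)]
    simp only [inner_toLpLin_left]
  rw [hchar, charFun_multivariateGaussian hS, charFun_multivariateGaussian hTST,
    real_inner_comm, ← inner_toLpLin_left, real_inner_comm]
  simp only [← mulVec_mulVec]
  rw [dotProduct_mulVec t.ofLp T, ← mulVec_transpose]

theorem mvGaussian_map_mulVec (m : Fin p → ℝ) {S : Matrix (Fin p) (Fin p) ℝ} (hS : S.PosDef)
    {T : Matrix (Fin q) (Fin p) ℝ} (hT : (T * S * Tᵀ).PosDef) :
    (mvGaussian m S).map (fun x => T *ᵥ x) = mvGaussian (T *ᵥ m) (T * S * Tᵀ) := by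
  have hlin := multivariateGaussian_map_toLpLin (WithLp.toLp 2 m) hS.posSemidef T
  rw [toLpLin_toLp, toLin'_apply] at hlin
  rw [mvGaussian_eq_map_multivariateGaussian m hS, mvGaussian_eq_map_multivariateGaussian _ hT,
    ← hlin, Measure.map_map (measurable_mulVec T) (by fun_prop), Measure.map_map (by fun_prop)
      (LinearMap.continuous_of_finiteDimensional _).measurable]
  simp only [Function.comp_def, ofLp_toLpLin, toLin'_apply]

theorem covariance_dotProduct_mvGaussian (m : Fin p → ℝ) {S : Matrix (Fin p) (Fin p) ℝ}
    (hS : S.PosDef) (u v : Fin p → ℝ) :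
    cov[fun x => u ⬝ᵥ x, fun x => v ⬝ᵥ x; mvGaussian m S] = u ⬝ᵥ (S *ᵥ v) := by
  have hinner (w : Fin p → ℝ) : (fun x : Fin p → ℝ => w ⬝ᵥ x) ∘ WithLp.ofLp =
      fun x : EuclideanSpace ℝ (Fin p) => inner ℝ (WithLp.toLp 2 w) x := by
    ext x
    simp [EuclideanSpace.inner_eq_star_dotProduct, dotProduct_comm]
  rw [mvGaussian_eq_map_multivariateGaussian m hS,
    covariance_map (by fun_prop) (by fun_prop) (by fun_prop), hinner, hinner,
    ← covarianceBilin_apply_eq_cov IsGaussian.memLp_two_id,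
    covarianceBilin_multivariateGaussian hS.posSemidef]

theorem indepFun_mulVec_mvGaussian (m : Fin p → ℝ) {S : Matrix (Fin p) (Fin p) ℝ}
    (hS : S.PosDef) {E : Matrix (Fin q) (Fin p) ℝ} {F : Matrix (Fin r) (Fin p) ℝ}
    (hEF : E * S * Fᵀ = 0) :
    IndepFun (fun x => E *ᵥ x) (fun x => F *ᵥ x) (mvGaussian m S) := by
  have := isGaussian_mvGaussian m hS
  have hlaw : HasGaussianLaw (fun x : Fin p → ℝ => (E *ᵥ x, F *ᵥ x)) (mvGaussian m S) :=
    IsGaussian.hasGaussianLaw_id.map_fun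
      (E.mulVecLin.toContinuousLinearMap.prod F.mulVecLin.toContinuousLinearMap)
  refine hlaw.indepFun_of_covariance_eval fun i j => ?_
  have hij : (E * S * Fᵀ) i j = E i ⬝ᵥ (S *ᵥ F j) := by
    rw [Matrix.mul_assoc]
    rfl
  exact (covariance_dotProduct_mvGaussian m hS (E i) (F j)).trans (by rw [← hij, hEF]; rfl)

end Gaussian

theorem condDistrib_comp_prodMk_of_indepFun {Ω α β γ : Type*} [MeasurableSpace Ω]
    [MeasurableSpace α] [MeasurableSpace β] [MeasurableSpace γ] [StandardBorelSpace γ] [Nonempty γ]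
    {P : Measure Ω} [IsProbabilityMeasure P] {X : Ω → α} {R : Ω → β} {h : α × β → γ}
    (hX : Measurable X) (hR : Measurable R) (hh : Measurable h) (hXR : IndepFun X R P) :
    ∀ᵐ x ∂P.map X, condDistrib (fun ω => h (X ω, R ω)) X P x =
      (P.map R).map fun r => h (x, r) := by
  have : IsProbabilityMeasure (P.map R) := Measure.isProbabilityMeasure_map hR.aemeasurable
  let κ : Kernel α γ := (Kernel.id ×ₖ Kernel.const α (P.map R)).map h
  have hκ (x : α) : κ x = (P.map R).map fun r => h (x, r) := by
    rw [Kernel.map_apply _ hh, Kernel.prod_apply, Kernel.id_apply, Kernel.const_apply,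
      Measure.dirac_prod, Measure.map_map hh measurable_prodMk_left]
    rfl
  have : IsMarkovKernel κ := Kernel.IsMarkovKernel.map _ hh
  have hjoint : P.map (fun ω => (X ω, h (X ω, R ω))) = P.map X ⊗ₘ κ := by
    have hm : Measurable fun z : α × β => (z.1, h z) := by fun_prop
    have hprod := (indepFun_iff_map_prod_eq_prod_map_map hX.aemeasurable hR.aemeasurable).1 hXR
    refine Measure.ext_of_lintegral _ fun f hf => ?_
    have hfm : Measurable fun z : α × β => f (z.1, h z) := hf.comp hm
    have hfh (x : α) : Measurable fun c => f (x, c) := hf.comp measurable_prodMk_left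
    calc ∫⁻ z, f z ∂P.map (fun ω => (X ω, h (X ω, R ω)))
        = ∫⁻ z, f (z.1, h z) ∂P.map (fun ω => (X ω, R ω)) := by
          rw [lintegral_map hf (by fun_prop), lintegral_map hfm (by fun_prop)]
      _ = ∫⁻ x, ∫⁻ r, f (x, h (x, r)) ∂P.map R ∂P.map X := by
          rw [hprod, lintegral_prod _ hfm.aemeasurable]
      _ = ∫⁻ z, f z ∂(P.map X ⊗ₘ κ) := by
          rw [Measure.lintegral_compProd hf]
          refine lintegral_congr fun x => ?_
          rw [hκ, lintegral_map (hfh x) (by fun_prop)]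
  filter_upwards [condDistrib_ae_eq_of_measure_eq_compProd X (by fun_prop) hjoint] with x hx
  rw [hx, hκ]

theorem condDistrib_id_mvGaussian {p q r : ℕ} (m : Fin p → ℝ) {S : Matrix (Fin p) (Fin p) ℝ}
    (hS : S.PosDef) {E : Matrix (Fin q) (Fin p) ℝ} {F : Matrix (Fin r) (Fin p) ℝ}
    (hEF : E * S * Fᵀ = 0) (hF : (F * S * Fᵀ).PosDef) [IsFiniteMeasure (mvGaussian m S)]
    {h : (Fin q → ℝ) × (Fin r → ℝ) → (Fin p → ℝ)} (hh : Measurable h)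
    (hx : ∀ x, h (E *ᵥ x, F *ᵥ x) = x) :
    ∀ᵐ y ∂(mvGaussian m S).map fun x => E *ᵥ x,
      condDistrib id (fun x => E *ᵥ x) (mvGaussian m S) y =
        (mvGaussian (F *ᵥ m) (F * S * Fᵀ)).map fun r => h (y, r) := by
  have := (isGaussian_mvGaussian m hS).toIsProbabilityMeasure
  have hcond := condDistrib_comp_prodMk_of_indepFun (measurable_mulVec E) (measurable_mulVec F) hh
    (indepFun_mulVec_mvGaussian m hS hEF)
  simp only [hx, mvGaussian_map_mulVec m hS hF] at hcond
  exact hcond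

section Regression

variable {ι κ₁ κ₂ R : Type*} [Fintype ι] [Fintype κ₁] [DecidableEq κ₁] [CommRing R]

/-- The matrix of the linear regression of `Gᵀx` on `Eᵀx` when `x` has covariance matrix `S`; it is
meaningful only if the covariance `Eᵀ * S * E` of `Eᵀx` is invertible. -/
noncomputable def regressionCoeff (S : Matrix ι ι R) (E : Matrix ι κ₁ R) (G : Matrix ι κ₂ R) :
    Matrix κ₂ κ₁ R :=
  Gᵀ * S * E * (Eᵀ * S * E)⁻¹

/-- The matrix sending `x` to the residual of the linear regression of `Gᵀx` on `Eᵀx`, the part of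
`Gᵀx` that is uncorrelated with `Eᵀx`. -/
noncomputable def regressionResidual (S : Matrix ι ι R) (E : Matrix ι κ₁ R) (G : Matrix ι κ₂ R) :
    Matrix κ₂ ι R :=
  Gᵀ - regressionCoeff S E G * Eᵀ

variable {S : Matrix ι ι R} {E : Matrix ι κ₁ R} {G : Matrix ι κ₂ R}

theorem regressionResidual_mul_mul (hE : IsUnit (Eᵀ * S * E).det) :
    regressionResidual S E G * S * E = 0 := by
  have hcoeff : regressionCoeff S E G * (Eᵀ * S * E) = Gᵀ * S * E := by
    rw [regressionCoeff, Matrix.mul_assoc, nonsing_inv_mul _ hE, Matrix.mul_one]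
  rw [regressionResidual, Matrix.sub_mul, Matrix.sub_mul, Matrix.mul_assoc _ Eᵀ,
    Matrix.mul_assoc _ (Eᵀ * S), hcoeff, sub_self]

theorem transpose_mul_mul_transpose_regressionResidual (hS : Sᵀ = S)
    (hE : IsUnit (Eᵀ * S * E).det) : Eᵀ * S * (regressionResidual S E G)ᵀ = 0 := by
  simpa [transpose_mul, hS, Matrix.mul_assoc] using
    congrArg transpose (regressionResidual_mul_mul (G := G) hE)

theorem regressionResidual_mul_mul_transpose (hS : Sᵀ = S) (hE : IsUnit (Eᵀ * S * E).det) :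
    regressionResidual S E G * S * (regressionResidual S E G)ᵀ =
      Gᵀ * S * G - regressionCoeff S E G * (Eᵀ * S * E) * (regressionCoeff S E G)ᵀ := by
  have hFE := regressionResidual_mul_mul (G := G) hE
  have hEF := transpose_mul_mul_transpose_regressionResidual (G := G) hS hE
  set B := regressionCoeff S E G
  set F := regressionResidual S E G
  have hGt : Gᵀ = F + B * Eᵀ := (sub_add_cancel _ _).symm
  have hG : G = Fᵀ + E * Bᵀ := by
    rw [← transpose_transpose G, hGt, transpose_add, transpose_mul, transpose_transpose]
  have hexpand : Gᵀ * S * G =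
      F * S * Fᵀ + F * S * E * Bᵀ + B * (Eᵀ * S * Fᵀ) + B * (Eᵀ * S * E) * Bᵀ := by
    rw [hGt, hG]
    simp only [Matrix.add_mul, Matrix.mul_add, Matrix.mul_assoc]
    abel
  rw [hexpand, hFE, hEF, Matrix.zero_mul, Matrix.mul_zero, add_zero, add_zero, add_sub_cancel_right]

theorem regressionResidual_mul_eq_one [DecidableEq κ₂] (hGG : Gᵀ * G = 1) (hEG : Eᵀ * G = 0) :
    regressionResidual S E G * G = 1 := by
  rw [regressionResidual, Matrix.sub_mul, Matrix.mul_assoc, hGG, hEG, Matrix.mul_zero, sub_zero]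

theorem add_regressionCoeff_mulVec_add_regressionResidual_mulVec [DecidableEq ι] [Fintype κ₂]
    (hfull : E * Eᵀ + G * Gᵀ = 1) (x : ι → R) :
    E *ᵥ (Eᵀ *ᵥ x) +
      G *ᵥ (regressionCoeff S E G *ᵥ (Eᵀ *ᵥ x) + regressionResidual S E G *ᵥ x) = x := by
  rw [regressionResidual, sub_mulVec, ← mulVec_mulVec _ _ Eᵀ, add_sub_cancel, mulVec_mulVec,
    mulVec_mulVec, ← add_mulVec, hfull, one_mulVec]

end Regression

theorem posDef_mul_mul_transpose_of_mul_eq_one {ι κ : Type*} [Fintype ι] [Finite κ]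
    [DecidableEq κ] {S : Matrix ι ι ℝ} (hS : S.PosDef) {F : Matrix κ ι ℝ} {G : Matrix ι κ ℝ}
    (hFG : F * G = 1) : (F * S * Fᵀ).PosDef := by
  cases nonempty_fintype κ
  have hinj : Function.Injective F.vecMul :=
    Function.LeftInverse.injective (g := fun x => x ᵥ* G) fun x => by
      simp only [vecMul_vecMul, hFG, vecMul_one]
  simpa using hS.mul_mul_conjTranspose_same hinj

theorem condDistrib_id_mvGaussian_of_orthonormal {p q r s : ℕ} (m : Fin p → ℝ)
    {S : Matrix (Fin p) (Fin p) ℝ} (hS : S.PosDef) [IsFiniteMeasure (mvGaussian m S)]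
    {E : Matrix (Fin p) (Fin q) ℝ} {G : Matrix (Fin p) (Fin r) ℝ} (hEE : Eᵀ * E = 1)
    (hGG : Gᵀ * G = 1) (hEG : Eᵀ * G = 0) (hfull : E * Eᵀ + G * Gᵀ = 1)
    {T : Matrix (Fin s) (Fin q) ℝ} {M : Matrix (Fin q) (Fin s) ℝ} (hMT : M * T = 1) :
    ∀ᵐ y ∂(mvGaussian m S).map fun x => (T * Eᵀ) *ᵥ x,
      condDistrib id (fun x => (T * Eᵀ) *ᵥ x) (mvGaussian m S) y =
        (mvGaussian (Gᵀ *ᵥ m + regressionCoeff S E G *ᵥ (M *ᵥ y - Eᵀ *ᵥ m))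
          (Gᵀ * S * G - regressionCoeff S E G * (Eᵀ * S * E) * (regressionCoeff S E G)ᵀ)).map
            fun z => E *ᵥ (M *ᵥ y) + G *ᵥ z := by
  have hSt : Sᵀ = S := by simpa using hS.isHermitian.eq
  have hu : IsUnit (Eᵀ * S * E).det :=
    (posDef_mul_mul_transpose_of_mul_eq_one hS hEE).det_pos.ne'.isUnit
  rw [← regressionResidual_mul_mul_transpose hSt hu]
  set B := regressionCoeff S E G
  set F := regressionResidual S E G with hF
  have hV : (F * S * Fᵀ).PosDef :=
    posDef_mul_mul_transpose_of_mul_eq_one hS (regressionResidual_mul_eq_one hGG hEG)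
  have huncorr : T * Eᵀ * S * Fᵀ = 0 := by
    rw [Matrix.mul_assoc, Matrix.mul_assoc, ← Matrix.mul_assoc Eᵀ,
      transpose_mul_mul_transpose_regressionResidual hSt hu, Matrix.mul_zero]
  let h : (Fin s → ℝ) × (Fin r → ℝ) → (Fin p → ℝ) := fun z =>
    E *ᵥ (M *ᵥ z.1) + G *ᵥ (B *ᵥ (M *ᵥ z.1) + z.2)
  have hh : Measurable h := Continuous.measurable (by fun_prop)
  have hrec (x : Fin p → ℝ) : h ((T * Eᵀ) *ᵥ x, F *ᵥ x) = x := by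
    have hM : M *ᵥ ((T * Eᵀ) *ᵥ x) = Eᵀ *ᵥ x := by
      rw [mulVec_mulVec, ← Matrix.mul_assoc, hMT, Matrix.one_mul]
    simp only [h, hM]
    exact add_regressionCoeff_mulVec_add_regressionResidual_mulVec hfull x
  filter_upwards [condDistrib_id_mvGaussian m hS huncorr hV hh hrec] with y hy
  have hmean : Gᵀ *ᵥ m + B *ᵥ (M *ᵥ y - Eᵀ *ᵥ m) = B *ᵥ (M *ᵥ y) + F *ᵥ m := by
    rw [hF, regressionResidual, sub_mulVec, ← mulVec_mulVec, mulVec_sub]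
    abel
  rw [hy, hmean, ← mvGaussian_map_const_add, Measure.map_map
    ((measurable_mulVec G).const_add _) (measurable_const_add _)]
  rfl

theorem isUnit_of_card_le_rank {κ K : Type*} [Fintype κ] [DecidableEq κ] [Field K]
    {C : Matrix κ κ K} (hC : Fintype.card κ ≤ C.rank) : IsUnit C := by
  rw [← mulVec_surjective_iff_isUnit]
  have hrange : LinearMap.range C.mulVecLin = ⊤ :=
    Submodule.eq_top_of_finrank_eq
      (le_antisymm (Submodule.finrank_le _) (by simpa [Matrix.rank] using hC))
  exact LinearMap.range_eq_top.1 hrange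

/-- Conditioning a Gaussian `x ~ N(μ, Σ)` on the affine constraint `Aᵀx = y`: for almost every
`y`, the conditional distribution of `x` given `Aᵀx = y` is the (degenerate) Gaussian with mean
`Q₁z₁* + Q₂(μ̃₂ + B(z₁* - μ̃₁))` and covariance `Q₂ Ṽ Q₂ᵀ`, realized as the pushforward of
`N(μ̃₂ + B(z₁* - μ̃₁), Ṽ)` under `z₂ ↦ Q₁z₁* + Q₂z₂`. -/
theorem stmt16 {n d : ℕ}
    (μ : Fin n → ℝ) (Sig : Matrix (Fin n) (Fin n) ℝ) (hSig : Sig.PosDef)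
    (P : Measure (Fin n → ℝ)) (hP : P = mvGaussian μ Sig) [IsFiniteMeasure P]
    (A : Matrix (Fin n) (Fin d) ℝ) (hA : A.rank = d)
    (Q₁ : Matrix (Fin n) (Fin d) ℝ) (Q₂ : Matrix (Fin n) (Fin (n - d)) ℝ)
    (hQ₁ : Q₁ᵀ * Q₁ = 1) (hQ₂ : Q₂ᵀ * Q₂ = 1) (hQ₁₂ : Q₁ᵀ * Q₂ = 0)
    (hQfull : Q₁ * Q₁ᵀ + Q₂ * Q₂ᵀ = 1)
    (hcol : ∃ C : Matrix (Fin d) (Fin d) ℝ, A = Q₁ * C)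
    (hnull : Aᵀ * Q₂ = 0)
    (μt₁ : Fin d → ℝ) (hμt₁ : μt₁ = Q₁ᵀ *ᵥ μ)
    (μt₂ : Fin (n - d) → ℝ) (hμt₂ : μt₂ = Q₂ᵀ *ᵥ μ)
    (Sig11 : Matrix (Fin d) (Fin d) ℝ) (hSig11 : Sig11 = Q₁ᵀ * Sig * Q₁)
    (Sig21 : Matrix (Fin (n - d)) (Fin d) ℝ) (hSig21 : Sig21 = Q₂ᵀ * Sig * Q₁)
    (Sig22 : Matrix (Fin (n - d)) (Fin (n - d)) ℝ) (hSig22 : Sig22 = Q₂ᵀ * Sig * Q₂)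
    (B : Matrix (Fin (n - d)) (Fin d) ℝ) (hB : B = Sig21 * Sig11⁻¹)
    (V : Matrix (Fin (n - d)) (Fin (n - d)) ℝ) (hV : V = Sig22 - B * Sig11 * Bᵀ)
    (z₁ : (Fin d → ℝ) → (Fin d → ℝ)) (hz₁ : ∀ y, z₁ y = (Aᵀ * Q₁)⁻¹ *ᵥ y) :
    ∀ᵐ y ∂(P.map fun x => Aᵀ *ᵥ x),
      condDistrib id (fun x => Aᵀ *ᵥ x) P y =
        Measure.map (fun z₂ => Q₁ *ᵥ z₁ y + Q₂ *ᵥ z₂)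
          (mvGaussian (μt₂ + B *ᵥ (z₁ y - μt₁)) V) := by
  obtain ⟨C, rfl⟩ := hcol
  have hC : IsUnit C := isUnit_of_card_le_rank (by simpa [hA] using rank_mul_le_right Q₁ C)
  have hCt : IsUnit Cᵀ.det := by rwa [det_transpose, ← isUnit_iff_isUnit_det]
  have hCQ : (Q₁ * C)ᵀ * Q₁ = Cᵀ := by
    rw [transpose_mul, Matrix.mul_assoc, hQ₁, Matrix.mul_one]
  subst hP hμt₁ hμt₂ hSig11 hSig21 hSig22 hB hV
  simp only [hz₁, hCQ]
  rw [transpose_mul]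
  exact condDistrib_id_mvGaussian_of_orthonormal μ hSig hQ₁ hQ₂ hQ₁₂ hQfull
    (nonsing_inv_mul _ hCt)
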